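/- arXiv:2110.12699 — 3 statements merged into one kernel-verified Lean document; each statement's English description precedes it below -/
import Mathlib

section
/- Embedding of synchronous TeamLTL into ∃TeamLTL with Boolean disjunction: let φ_synch := G((o ∧ X¬o) ⩔ (¬o ∧ Xo)), a TeamLTL(⩔) formula. For every TeamLTL formula φ over AP and every nonempty team T over AP: T ⊨ₛ φ if and only if T_o ⊨∃ (φ ∧ φ_synch). -/
namespace TTS

abbrev Trace (AP : Type) := ℕ → Set AP

def IsStutTef {ι : Type} (τ : ℕ → ι → ℕ) : Prop :=
  ∀ n i, τ n i ≤ τ (n + 1) i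

def IsTef {ι : Type} (τ : ℕ → ι → ℕ) : Prop :=
  IsStutTef τ ∧ (∀ n, τ n ≠ τ (n + 1)) ∧ (∀ n i, τ (n + 1) i ≤ τ n i + 1)

def Initial {ι : Type} (τ : ℕ → ι → ℕ) : Prop := ∀ i, τ 0 i = 0

def Fair {ι : Type} (τ : ℕ → ι → ℕ) : Prop :=
  ∀ (m : ℕ) (i : ι), ∃ n, m ≤ τ n i

def Synchronous {ι : Type} (τ : ℕ → ι → ℕ) : Prop :=
  ∀ n (i j : ι), τ n i = τ n j

def shift {ι : Type} (τ : ℕ → ι → ℕ) (k : ℕ) : ℕ → ι → ℕ := fun n => τ (n + k)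

/-- TeamLTL formulas extended with Boolean disjunction ⩔, the non-emptiness
atom NE, and the universal subteam quantifier A¹. -/
inductive EFormula (AP : Type) : Type
  | atom : AP → EFormula AP
  | natom : AP → EFormula AP
  | and : EFormula AP → EFormula AP → EFormula AP
  | or : EFormula AP → EFormula AP → EFormula AP
  | bor : EFormula AP → EFormula AP → EFormula AP
  | NE : EFormula AP
  | A1 : EFormula AP → EFormula AP
  | X : EFormula AP → EFormula AP
  | U : EFormula AP → EFormula AP → EFormula AP
  | W : EFormula AP → EFormula AP → EFormula AP

def esat {AP : Type} : {ι : Type} → (ι → Trace AP) → (ℕ → ι → ℕ) → EFormula AP → Prop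
  | _, T, τ, .atom p => ∀ i, p ∈ T i (τ 0 i)
  | _, T, τ, .natom p => ∀ i, p ∉ T i (τ 0 i)
  | _, T, τ, .and φ ψ => esat T τ φ ∧ esat T τ ψ
  | ι, T, τ, .or φ ψ =>
      ∃ P : ι → Prop,
        esat (fun i : {i // P i} => T i.1) (fun n i => τ n i.1) φ ∧
        esat (fun i : {i // ¬ P i} => T i.1) (fun n i => τ n i.1) ψ
  | _, T, τ, .bor φ ψ => esat T τ φ ∨ esat T τ ψ
  | ι, _, _, .NE => Nonempty ι
  | ι, T, τ, .A1 φ =>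
      ∀ i : ι, esat (fun j : {j // j = i} => T j.1) (fun n j => τ n j.1) φ
  | _, T, τ, .X φ => esat T (shift τ 1) φ
  | _, T, τ, .U φ ψ =>
      ∃ k, esat T (shift τ k) ψ ∧ ∀ m, m < k → esat T (shift τ m) φ
  | _, T, τ, .W φ ψ =>
      ∀ k, esat T (shift τ k) φ ∨ ∃ m, m ≤ k ∧ esat T (shift τ m) ψ

def esatE {AP ι : Type} (T : ι → Trace AP) (φ : EFormula AP) : Prop :=
  ∃ τ : ℕ → ι → ℕ, IsTef τ ∧ Initial τ ∧ esat T τ φ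

def esatA {AP ι : Type} (T : ι → Trace AP) (φ : EFormula AP) : Prop :=
  ∀ τ : ℕ → ι → ℕ, IsTef τ → Initial τ → esat T τ φ

def esatS {AP ι : Type} (T : ι → Trace AP) (φ : EFormula AP) : Prop :=
  esat T (fun n _ => n) φ

/-- Plain TeamLTL formulas (negation normal form, no extended connectives). -/
inductive Formula (AP : Type) : Type
  | atom : AP → Formula AP
  | natom : AP → Formula AP
  | and : Formula AP → Formula AP → Formula AP
  | or : Formula AP → Formula AP → Formula AP
  | X : Formula AP → Formula AP
  | U : Formula AP → Formula AP → Formula AP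
  | W : Formula AP → Formula AP → Formula AP

/-- Embedding of plain TeamLTL formulas into the extended syntax. -/
def Formula.toE {AP : Type} : Formula AP → EFormula AP
  | .atom p => .atom p
  | .natom p => .natom p
  | .and φ ψ => .and φ.toE ψ.toE
  | .or φ ψ => .or φ.toE ψ.toE
  | .X φ => .X φ.toE
  | .U φ ψ => .U φ.toE ψ.toE
  | .W φ ψ => .W φ.toE ψ.toE

def sat {AP ι : Type} (T : ι → Trace AP) (τ : ℕ → ι → ℕ) (φ : Formula AP) : Prop :=
  esat T τ φ.toE

def satE {AP ι : Type} (T : ι → Trace AP) (φ : Formula AP) : Prop :=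
  ∃ τ : ℕ → ι → ℕ, IsTef τ ∧ Initial τ ∧ sat T τ φ

def satA {AP ι : Type} (T : ι → Trace AP) (φ : Formula AP) : Prop :=
  ∀ τ : ℕ → ι → ℕ, IsTef τ → Initial τ → sat T τ φ

def satS {AP ι : Type} (T : ι → Trace AP) (φ : Formula AP) : Prop :=
  sat T (fun n _ => n) φ

/-- The team T_o over AP ∪ {o}: the fresh proposition o (here: none) is added
at exactly the even positions of every trace. -/
def addO {AP ι : Type} (T : ι → Trace AP) : ι → Trace (Option AP) :=
  fun i n => {x | (∃ p, x = some p ∧ p ∈ T i n) ∨ (x = none ∧ Even n)}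

/-- Mapping a plain formula along a renaming of atomic propositions. -/
def Formula.map {AP AP' : Type} (f : AP → AP') : Formula AP → Formula AP'
  | .atom p => .atom (f p)
  | .natom p => .natom (f p)
  | .and φ ψ => .and (φ.map f) (ψ.map f)
  | .or φ ψ => .or (φ.map f) (ψ.map f)
  | .X φ => .X (φ.map f)
  | .U φ ψ => .U (φ.map f) (ψ.map f)
  | .W φ ψ => .W (φ.map f) (ψ.map f)
/-- Gφ := φ W ⊥ with ⊥ := o ∧ ¬o for the fresh proposition o := none. -/
def G' {AP : Type} (φ : EFormula (Option AP)) : EFormula (Option AP) :=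
  .W φ (.and (.atom none) (.natom none))

/-- φ_synch := G((o ∧ X¬o) ⩔ (¬o ∧ Xo)). -/
def phiSynch (AP : Type) : EFormula (Option AP) :=
  G' (.bor (.and (.atom none) (.X (.natom none)))
           (.and (.natom none) (.X (.atom none))))

/-!
Along an initial tef, `φ_synch` says that all positions have the same parity and that this parity
flips at every step. A trace advances by at most one position per step, so a flip means that it
advances by exactly one: the synchronous tef is the only initial tef satisfying `φ_synch`. Since
`φ` does not mention `o`, it cannot tell `T_o` from `T`.
-/

section

variable {AP ι : Type}

theorem sat_map {AP' : Type} (f : AP → AP') (T : ι → Trace AP') (τ : ℕ → ι → ℕ)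
    (φ : Formula AP) :
    sat T τ (φ.map f) ↔ sat (fun i n => f ⁻¹' T i n) τ φ := by
  unfold sat
  induction φ generalizing ι with
  | atom p => rfl
  | natom p => rfl
  | and φ ψ ihφ ihψ => exact and_congr (ihφ T τ) (ihψ T τ)
  | or φ ψ ihφ ihψ => exact exists_congr fun P => and_congr (ihφ _ _) (ihψ _ _)
  | X _ ih => exact ih T (shift τ 1)
  | U φ ψ ihφ ihψ => simp only [Formula.map, Formula.toE, esat, ihφ, ihψ]
  | W φ ψ ihφ ihψ => simp only [Formula.map, Formula.toE, esat, ihφ, ihψ]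

theorem some_mem_addO {T : ι → Trace AP} {i : ι} {n : ℕ} {p : AP} :
    some p ∈ addO T i n ↔ p ∈ T i n := by
  simp [addO]

theorem none_mem_addO {T : ι → Trace AP} {i : ι} {n : ℕ} :
    none ∈ addO T i n ↔ Even n := by
  simp [addO]

theorem sat_addO_map_some {T : ι → Trace AP} {τ : ℕ → ι → ℕ} {φ : Formula AP} :
    sat (addO T) τ (φ.map some) ↔ sat T τ φ := by
  have preimage_addO : (fun i n => some ⁻¹' addO T i n) = T := by
    funext i n
    ext p
    exact some_mem_addO
  rw [sat_map, preimage_addO]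

theorem esat_G'_iff [Nonempty ι] {T : ι → Trace (Option AP)} {τ : ℕ → ι → ℕ}
    {φ : EFormula (Option AP)} :
    esat T τ (G' φ) ↔ ∀ k, esat T (shift τ k) φ := by
  refine forall_congr' fun k => or_iff_left ?_
  rintro ⟨m, -, ho, hno⟩
  obtain ⟨i⟩ := ‹Nonempty ι›
  exact hno i (ho i)

theorem esat_phiSynch_iff_parity [Nonempty ι] {T : ι → Trace AP} {τ : ℕ → ι → ℕ} :
    esat (addO T) τ (phiSynch AP) ↔
      ∀ k, ((∀ i, Even (τ k i)) ∧ ∀ i, Odd (τ (k + 1) i)) ∨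
        ((∀ i, Odd (τ k i)) ∧ ∀ i, Even (τ (k + 1) i)) := by
  simp only [phiSynch, esat_G'_iff, esat, shift, none_mem_addO, Nat.not_even_iff_odd, zero_add,
    Nat.add_comm 1]

/-- The synchronous initial tef `σ`, along which every trace advances by one position at each
step. It unfolds to the function used in `satS`. -/
def syncTef (ι : Type) : ℕ → ι → ℕ := fun n _ => n

theorem isTef_syncTef [Nonempty ι] : IsTef (syncTef ι) := by
  refine ⟨fun n _ => n.le_succ, fun n h => ?_, fun _ _ => le_rfl⟩
  obtain ⟨i⟩ := ‹Nonempty ι›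
  exact n.succ_ne_self (congrFun h i).symm

theorem initial_syncTef : Initial (syncTef ι) := fun _ => rfl

theorem IsTef.eq_syncTef {τ : ℕ → ι → ℕ} (hτ : IsTef τ) (hinit : Initial τ)
    (hmove : ∀ n i, τ n i ≠ τ (n + 1) i) : τ = syncTef ι := by
  obtain ⟨hmono, -, hstep⟩ := hτ
  funext n i
  induction n with
  | zero => exact hinit i
  | succ n ih =>
    calc τ (n + 1) i = τ n i + 1 :=
          le_antisymm (hstep n i) (lt_of_le_of_ne (hmono n i) (hmove n i))
      _ = n + 1 := by rw [ih, syncTef]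

theorem esat_phiSynch_syncTef [Nonempty ι] {T : ι → Trace AP} :
    esat (addO T) (syncTef ι) (phiSynch AP) := by
  rw [esat_phiSynch_iff_parity]
  intro k
  rcases k.even_or_odd with hk | hk
  · exact .inl ⟨fun _ => hk, fun _ => hk.add_one⟩
  · exact .inr ⟨fun _ => hk, fun _ => hk.add_one⟩

theorem ne_succ_of_esat_phiSynch {T : ι → Trace AP} {τ : ℕ → ι → ℕ}
    (h : esat (addO T) τ (phiSynch AP)) (n : ℕ) (i : ι) : τ n i ≠ τ (n + 1) i := by
  have : Nonempty ι := ⟨i⟩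
  intro heq
  rcases esat_phiSynch_iff_parity.1 h n with ⟨heven, hodd⟩ | ⟨hodd, heven⟩
  · exact Nat.not_even_iff_odd.2 (hodd i) (heq ▸ heven i)
  · exact Nat.not_even_iff_odd.2 (hodd i) (heq ▸ heven i)

theorem IsTef.esat_phiSynch_iff [Nonempty ι] {T : ι → Trace AP} {τ : ℕ → ι → ℕ}
    (hτ : IsTef τ) (hinit : Initial τ) :
    esat (addO T) τ (phiSynch AP) ↔ τ = syncTef ι := by
  constructor
  · exact fun h => hτ.eq_syncTef hinit (ne_succ_of_esat_phiSynch h)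
  · rintro rfl
    exact esat_phiSynch_syncTef

end

/-- Embedding of synchronous TeamLTL into ∃TeamLTL(⩔) via φ_synch. -/
theorem embed_sync_into_existsTeamLTL_bor (AP ι : Type) (hne : Nonempty ι)
    (T : ι → Trace AP) (φ : Formula AP) :
    satS T φ ↔ esatE (addO T) (.and (φ.map some).toE (phiSynch AP)) := by
  constructor
  · intro h
    exact ⟨syncTef ι, isTef_syncTef, initial_syncTef, sat_addO_map_some.2 h,
      (isTef_syncTef.esat_phiSynch_iff initial_syncTef).2 rfl⟩
  · rintro ⟨τ, hτ, hinit, hφ, hsynch⟩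
    obtain rfl := (hτ.esat_phiSynch_iff hinit).1 hsynch
    exact sat_addO_map_some.1 hφ

end TTS
end

section
/- The formula F φ_off detects non-synchronicity: let o ∈ AP and φ_off := ((NE ∧ o ∧ Xo) ∨ ⊤) ⩔ ((NE ∧ ¬o ∧ X¬o) ∨ ⊤). Let T = (t_i)_{i∈ι} be a team with ι ≠ ∅ such that o ∈ t_i(n) iff n is even, for all i ∈ ι and n ∈ ℕ, and let τ be an initial tef for ι. Then (T,τ) ⊨ F φ_off if and only if τ is not synchronous. -/
namespace TTS

/-- ⊤ := o ∨ ¬o for the fixed proposition o. -/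
def topF {AP : Type} (o : AP) : EFormula AP := .or (.atom o) (.natom o)

/-- φ_off := ((NE ∧ o ∧ Xo) ∨ ⊤) ⩔ ((NE ∧ ¬o ∧ X¬o) ∨ ⊤). -/
def phiOff {AP : Type} (o : AP) : EFormula AP :=
  .bor (.or (.and .NE (.and (.atom o) (.X (.atom o)))) (topF o))
       (.or (.and .NE (.and (.natom o) (.X (.natom o)))) (topF o))

/-! Along a tef each trace advances by zero or one position at every step. On a trace alternating on
`o`, the truth value of `o` repeats between two consecutive steps exactly when that trace stutters,
and `φ_off` says that some trace repeats the value of `o`. If no trace ever stutters, all of them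
move in lockstep; conversely a stutter of one trace in a synchronous tef is a stutter of the whole
team, which strict monotonicity excludes. -/

/-- Flatness of a formula in team semantics: a team satisfies `φ` iff each of its traces, read along
its own time evaluation, does. Satisfaction by a single trace is given explicitly as a predicate `p`
of that trace and its sequence of positions, so that it can be computed along the formula. -/
def FlatWith {AP : Type} (φ : EFormula AP) (p : Trace AP → (ℕ → ℕ) → Prop) : Prop :=
  ∀ ⦃ι : Type⦄ (T : ι → Trace AP) (τ : ℕ → ι → ℕ), esat T τ φ ↔ ∀ i, p (T i) fun n => τ n i

namespace FlatWith

variable {AP : Type} {φ ψ : EFormula AP} {p q : Trace AP → (ℕ → ℕ) → Prop}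

theorem atom (a : AP) : FlatWith (.atom a) fun t s => a ∈ t (s 0) := fun _ _ _ => Iff.rfl

theorem natom (a : AP) : FlatWith (.natom a) fun t s => a ∉ t (s 0) := fun _ _ _ => Iff.rfl

theorem and (hφ : FlatWith φ p) (hψ : FlatWith ψ q) :
    FlatWith (.and φ ψ) fun t s => p t s ∧ q t s := fun _ T τ => by
  simp only [esat, hφ T τ, hψ T τ, forall_and]

theorem X (hφ : FlatWith φ p) : FlatWith (.X φ) fun t s => p t fun n => s (n + 1) :=
  fun _ T τ => hφ T (shift τ 1)

end FlatWith

section Satisfaction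

variable {AP ι : Type} (o : AP) (T : ι → Trace AP) (τ : ℕ → ι → ℕ)

theorem esat_topF : esat T τ (topF o) :=
  ⟨fun i => o ∈ T i (τ 0 i), fun i => i.2, fun i => i.2⟩

theorem esat_topF_until_iff (φ : EFormula AP) :
    esat T τ (.U (topF o) φ) ↔ ∃ k, esat T (shift τ k) φ := by
  simp only [esat, esat_topF, implies_true, and_true]

theorem FlatWith.esat_ne_and_or_topF_iff {φ : EFormula AP} {p : Trace AP → (ℕ → ℕ) → Prop}
    (hφ : FlatWith φ p) :
    esat T τ (.or (.and .NE φ) (topF o)) ↔ ∃ i, p (T i) fun n => τ n i := by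
  constructor
  · rintro ⟨P, ⟨⟨i⟩, hP⟩, -⟩
    exact ⟨i, (hφ _ _).1 hP i⟩
  · rintro ⟨i, hi⟩
    refine ⟨(· = i), ⟨⟨i, rfl⟩, (hφ _ _).2 ?_⟩, esat_topF o _ _⟩
    rintro ⟨_, rfl⟩
    exact hi

theorem esat_phiOff_iff :
    esat T τ (phiOff o) ↔ ∃ i, (o ∈ T i (τ 0 i) ↔ o ∈ T i (τ 1 i)) :=
  calc esat T τ (phiOff o)
    _ ↔ (∃ i, o ∈ T i (τ 0 i) ∧ o ∈ T i (τ 1 i)) ∨ ∃ i, o ∉ T i (τ 0 i) ∧ o ∉ T i (τ 1 i) :=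
        or_congr (((FlatWith.atom o).and (FlatWith.atom o).X).esat_ne_and_or_topF_iff o T τ)
          (((FlatWith.natom o).and (FlatWith.natom o).X).esat_ne_and_or_topF_iff o T τ)
    _ ↔ ∃ i, (o ∈ T i (τ 0 i) ↔ o ∈ T i (τ 1 i)) := by
        simp only [← exists_or, iff_iff_and_or_not_and_not]

end Satisfaction

section Tef

variable {ι : Type} {τ : ℕ → ι → ℕ}

theorem IsTef.succ_eq_self_or_succ_eq_add_one (hτ : IsTef τ) (n : ℕ) (i : ι) :
    τ (n + 1) i = τ n i ∨ τ (n + 1) i = τ n i + 1 := by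
  have := hτ.1 n i
  have := hτ.2.2 n i
  omega

theorem Synchronous.succ_ne_self (hs : Synchronous τ) {n : ℕ} (hn : τ n ≠ τ (n + 1)) (i : ι) :
    τ (n + 1) i ≠ τ n i := fun hi =>
  hn <| funext fun j => by rw [hs n j i, hs (n + 1) j i, hi]

theorem synchronous_of_succ_eq_add_one (h0 : ∀ i j, τ 0 i = τ 0 j)
    (hstep : ∀ n i, τ (n + 1) i = τ n i + 1) : Synchronous τ := by
  intro n i j
  induction n with
  | zero => exact h0 i j
  | succ n ih => rw [hstep, hstep, ih]

theorem IsTef.not_synchronous_iff_exists_succ_eq_self (hτ : IsTef τ) (h0 : ∀ i j, τ 0 i = τ 0 j) :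
    ¬ Synchronous τ ↔ ∃ n i, τ (n + 1) i = τ n i := by
  rw [not_iff_comm]
  push Not
  exact ⟨fun hne => synchronous_of_succ_eq_add_one h0 fun n i =>
      (hτ.succ_eq_self_or_succ_eq_add_one n i).resolve_left (hne n i),
    fun hs n => hs.succ_ne_self (hτ.2.1 n)⟩

theorem IsTef.mem_iff_mem_succ_iff {AP : Type} {o : AP} {t : Trace AP}
    (hτ : IsTef τ) (halt : ∀ n, o ∈ t (n + 1) ↔ o ∉ t n) (n : ℕ) (i : ι) :
    (o ∈ t (τ n i) ↔ o ∈ t (τ (n + 1) i)) ↔ τ (n + 1) i = τ n i := by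
  rcases hτ.succ_eq_self_or_succ_eq_add_one n i with h | h <;> simp [h, halt]

end Tef

theorem F_phiOff_detects_nonsynchronicity_general {AP ι : Type} (o : AP) (T : ι → Trace AP)
    (halt : ∀ (i : ι) (n : ℕ), o ∈ T i (n + 1) ↔ o ∉ T i n)
    {τ : ℕ → ι → ℕ} (hτ : IsTef τ) (h0 : ∀ i j, τ 0 i = τ 0 j) :
    esat T τ (.U (topF o) (phiOff o)) ↔ ¬ Synchronous τ :=
  calc esat T τ (.U (topF o) (phiOff o))
    _ ↔ ∃ n, esat T (shift τ n) (phiOff o) := esat_topF_until_iff o T τ _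
    _ ↔ ∃ n i, (o ∈ T i (τ n i) ↔ o ∈ T i (τ (n + 1) i)) := by
        simp only [esat_phiOff_iff, shift, zero_add, add_comm 1]
    _ ↔ ∃ n i, τ (n + 1) i = τ n i :=
        exists_congr fun n => exists_congr fun i => hτ.mem_iff_mem_succ_iff (halt i) n i
    _ ↔ ¬ Synchronous τ := (hτ.not_synchronous_iff_exists_succ_eq_self h0).symm

/-- F φ_off detects non-synchronicity on teams alternating on o. -/
theorem F_phiOff_detects_nonsynchronicity (AP ι : Type) (o : AP)
    (hne : Nonempty ι) (T : ι → Trace AP)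
    (halt : ∀ (i : ι) (n : ℕ), o ∈ T i n ↔ Even n)
    (τ : ℕ → ι → ℕ) (hτ : IsTef τ) (hinit : Initial τ) :
    esat T τ (.U (topF o) (phiOff o)) ↔ ¬ Synchronous τ :=
  F_phiOff_detects_nonsynchronicity_general o T
    (fun i n => by rw [halt, halt, Nat.even_add_one]) hτ fun i j => (hinit i).trans (hinit j).symm

end TTS
end

section
/- Every generalised atom is expressible in TeamLTL(⩔, NE, A¹): for every n ≥ 1, every set B ⊆ 𝒫({0,1}ⁿ) of n-ary Boolean relations, and all propositional formulas α₁,…,αₙ over AP, there exists a formula ψ of TeamLTL extended with ⩔, NE and A¹ such that for every team T = (t_i)_{i∈ι} and every tef τ for ι: (T,τ) ⊨ ψ if and only if { (⟦α₁⟧_{(t_i,τ(0)(i))}, …, ⟦αₙ⟧_{(t_i,τ(0)(i))}) : i ∈ ι } ∈ B. -/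
namespace TTS

/-- Propositional formulas over AP. -/
inductive PropForm (AP : Type) : Type
  | atom : AP → PropForm AP
  | not : PropForm AP → PropForm AP
  | and : PropForm AP → PropForm AP → PropForm AP
  | or : PropForm AP → PropForm AP → PropForm AP

/-- Classical truth value of a propositional formula in a valuation. -/
def pval {AP : Type} (v : Set AP) : PropForm AP → Prop
  | .atom p => p ∈ v
  | .not φ => ¬ pval v φ
  | .and φ ψ => pval v φ ∧ pval v ψ
  | .or φ ψ => pval v φ ∨ pval v ψ

/-!
Whether a team realises exactly the relation `R` is the conjunction of a condition on every trace
(its tuple of truth values lies in `R`) and, for each `v ∈ R`, a condition on some trace (its tuple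
is `v`). The former is flat: on flat formulas the splitting disjunction is the union of conditions.
The latter is `(NE ∧ χ) ∨ ⊤`, which splits off a nonempty subteam satisfying a flat formula `χ`
that defines `v`. There are finitely many relations, so `⩔` ranges over those in `B`. Working
without distinguished propositions, `⊤` is `A¹ NE`, and `A¹ (NE ∨ NE)` holds only in the empty team
because a singleton cannot be split into two nonempty parts.
-/

/-- A property of a team together with a function `τ` giving the positions on its traces. The
Boolean operations on team properties are the pointwise ones, so that `⊔` interprets `⩔` and not
the splitting disjunction `∨`. -/
abbrev TeamProperty (AP : Type) := (ι : Type) → (ι → Trace AP) → (ℕ → ι → ℕ) → Prop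

/-- The lattice of team properties defined by a formula of TeamLTL(⩔, NE, A¹). -/
def definable (AP : Type) : Sublattice (TeamProperty AP) where
  carrier := {Q | ∃ ψ : EFormula AP, ∀ ι T τ, esat T τ ψ ↔ Q ι T τ}
  supClosed' := by
    rintro _ ⟨φ, hφ⟩ _ ⟨ψ, hψ⟩
    exact ⟨.bor φ ψ, fun ι T τ => or_congr (hφ ι T τ) (hψ ι T τ)⟩
  infClosed' := by
    rintro _ ⟨φ, hφ⟩ _ ⟨ψ, hψ⟩
    exact ⟨.and φ ψ, fun ι T τ => and_congr (hφ ι T τ) (hψ ι T τ)⟩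

section

variable {AP : Type}

/-- The team property that the current valuation of every trace lies in `c`. -/
def everywhere (c : Set (Set AP)) : TeamProperty AP :=
  fun _ T τ => ∀ i, T i (τ 0 i) ∈ c

theorem top_mem_definable : ⊤ ∈ definable AP :=
  ⟨.A1 .NE, fun _ _ _ => iff_of_true (fun i => ⟨⟨i, rfl⟩⟩) trivial⟩

theorem everywhere_empty_mem_definable : everywhere ∅ ∈ definable AP := by
  refine ⟨.A1 (.or .NE .NE), fun ι T τ => ⟨fun h i => ?_, fun h i => (h i).elim⟩⟩
  obtain ⟨P, ⟨⟨⟨_, rfl⟩, hP⟩⟩, ⟨⟨⟨_, rfl⟩, hnP⟩⟩⟩ := h i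
  exact hnP hP

theorem bot_mem_definable : ⊥ ∈ definable AP := by
  obtain ⟨φ, hφ⟩ := everywhere_empty_mem_definable (AP := AP)
  refine ⟨.and .NE φ, fun ι T τ => iff_of_false ?_ id⟩
  rintro ⟨⟨i⟩, h⟩
  exact (hφ ι T τ).mp h i

theorem everywhere_inter (c d : Set (Set AP)) :
    everywhere (c ∩ d) = everywhere c ⊓ everywhere d :=
  funext₃ fun _ _ _ => propext forall_and

theorem everywhere_union_mem_definable {c d : Set (Set AP)}
    (hc : everywhere c ∈ definable AP) (hd : everywhere d ∈ definable AP) :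
    everywhere (c ∪ d) ∈ definable AP := by
  obtain ⟨φ, hφ⟩ := hc
  obtain ⟨ψ, hψ⟩ := hd
  refine ⟨.or φ ψ, fun ι T τ => ?_⟩
  simp only [esat, hφ, hψ]
  constructor
  · rintro ⟨P, hP, hnP⟩ i
    by_cases hi : P i
    · exact Or.inl (hP ⟨i, hi⟩)
    · exact Or.inr (hnP ⟨i, hi⟩)
  · intro h
    exact ⟨fun i => T i (τ 0 i) ∈ c, fun i => i.2, fun i => (h i.1).resolve_left i.2⟩

/-- The lattice of flatly definable sets of valuations: those for which some formula holds in a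
team exactly when the current valuation of every trace lies in the set. -/
def flatDefinable (AP : Type) : Sublattice (Set (Set AP)) where
  carrier := {c | everywhere c ∈ definable AP}
  supClosed' := fun _ hc _ hd => everywhere_union_mem_definable hc hd
  infClosed' := fun c hc d hd => by
    change everywhere (c ∩ d) ∈ definable AP
    rw [everywhere_inter]
    exact Sublattice.inf_mem hc hd

theorem univ_mem_flatDefinable : Set.univ ∈ flatDefinable AP := by
  have everywhere_univ : everywhere (Set.univ : Set (Set AP)) = ⊤ :=
    funext₃ fun _ _ _ => propext (iff_of_true (fun _ => trivial) trivial)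
  change everywhere Set.univ ∈ definable AP
  exact everywhere_univ ▸ top_mem_definable

theorem setOf_pval_and_compl_mem_flatDefinable (α : PropForm AP) :
    {s | pval s α} ∈ flatDefinable AP ∧ {s | pval s α}ᶜ ∈ flatDefinable AP := by
  induction α with
  | atom p => exact ⟨⟨.atom p, fun _ _ _ => Iff.rfl⟩, ⟨.natom p, fun _ _ _ => Iff.rfl⟩⟩
  | not φ hφ => exact ⟨hφ.2, by simpa [pval, Set.compl_ofPred] using hφ.1⟩
  | and φ ψ hφ hψ =>
    have compl_and : {s | pval s (φ.and ψ)}ᶜ = {s | pval s φ}ᶜ ∪ {s | pval s ψ}ᶜ :=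
      Set.compl_inter _ _
    exact ⟨Sublattice.inf_mem hφ.1 hψ.1, compl_and ▸ Sublattice.sup_mem hφ.2 hψ.2⟩
  | or φ ψ hφ hψ =>
    have compl_or : {s | pval s (φ.or ψ)}ᶜ = {s | pval s φ}ᶜ ∩ {s | pval s ψ}ᶜ :=
      Set.compl_union _ _
    exact ⟨Sublattice.sup_mem hφ.1 hψ.1, compl_or ▸ Sublattice.inf_mem hφ.2 hψ.2⟩

/-- The tuple of truth values of the propositional formulas `α` in the valuation `s`. -/
def truthTuple {κ : Type*} (α : κ → PropForm AP) (s : Set AP) : κ → Prop :=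
  fun j => pval s (α j)

theorem preimage_truthTuple_singleton_mem_flatDefinable {κ : Type*} [Finite κ]
    (α : κ → PropForm AP) (v : κ → Prop) : truthTuple α ⁻¹' {v} ∈ flatDefinable AP := by
  have fiber_eq : truthTuple α ⁻¹' {v} = ⨅ j, {s | pval s (α j) ↔ v j} := by
    ext s
    simp [truthTuple, funext_iff]
  rw [fiber_eq]
  refine (flatDefinable AP).infClosed.iInf_mem univ_mem_flatDefinable fun j => ?_
  obtain ⟨h, h_compl⟩ := setOf_pval_and_compl_mem_flatDefinable (α j)
  by_cases hv : v j
  · simpa [hv] using h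
  · simpa [hv, Set.compl_ofPred] using h_compl

/-- The team property that the current valuation of some trace lies in `c`. -/
def somewhere (c : Set (Set AP)) : TeamProperty AP :=
  fun _ T τ => ∃ i, T i (τ 0 i) ∈ c

theorem somewhere_mem_definable {c : Set (Set AP)} (hc : c ∈ flatDefinable AP) :
    somewhere c ∈ definable AP := by
  obtain ⟨φ, hφ⟩ := hc
  obtain ⟨ψ, hψ⟩ := top_mem_definable (AP := AP)
  refine ⟨.or (.and .NE φ) ψ, fun ι T τ => ?_⟩
  simp only [esat, hφ, hψ]
  constructor
  · rintro ⟨P, ⟨⟨i⟩, h⟩, -⟩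
    exact ⟨i.1, h i⟩
  · rintro ⟨i, hi⟩
    refine ⟨fun j => j = i, ⟨⟨⟨i, rfl⟩⟩, ?_⟩, trivial⟩
    rintro ⟨_, rfl⟩
    exact hi

/-- The set of values that the observation `f` of valuations currently takes on the team. -/
def observed {ι : Type} {σ : Type*} (f : Set AP → σ) (T : ι → Trace AP) (τ : ℕ → ι → ℕ) : Set σ :=
  Set.range fun i => f (T i (τ 0 i))

section FiniteObservation

variable {σ : Type*} [Finite σ] {f : Set AP → σ}

theorem preimage_mem_flatDefinable (hf : ∀ a, f ⁻¹' {a} ∈ flatDefinable AP) (R : Set σ) :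
    f ⁻¹' R ∈ flatDefinable AP := by
  rw [← Set.biUnion_preimage_singleton]
  exact (flatDefinable AP).supClosed.biSup_mem R.toFinite everywhere_empty_mem_definable
    fun a _ => hf a

theorem observed_eq_mem_definable (hf : ∀ a, f ⁻¹' {a} ∈ flatDefinable AP) (R : Set σ) :
    (fun _ T τ => observed f T τ = R) ∈ definable AP := by
  have observed_eq_decomposition : (fun _ T τ => observed f T τ = R : TeamProperty AP) =
      everywhere (f ⁻¹' R) ⊓ ⨅ a ∈ R, somewhere (f ⁻¹' {a}) := by
    ext ι T τ
    simp [observed, everywhere, somewhere, Set.Subset.antisymm_iff, Set.subset_def]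
  rw [observed_eq_decomposition]
  exact Sublattice.inf_mem (preimage_mem_flatDefinable hf R)
    ((definable AP).infClosed.biInf_mem R.toFinite top_mem_definable
      fun a _ => somewhere_mem_definable (hf a))

theorem observed_mem_mem_definable (hf : ∀ a, f ⁻¹' {a} ∈ flatDefinable AP)
    (B : Set (Set σ)) : (fun _ T τ => observed f T τ ∈ B) ∈ definable AP := by
  have observed_mem_decomposition : (fun _ T τ => observed f T τ ∈ B : TeamProperty AP) =
      ⨆ R ∈ B, fun _ T τ => observed f T τ = R := by
    ext ι T τ
    simp
  rw [observed_mem_decomposition]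
  exact (definable AP).supClosed.biSup_mem B.toFinite bot_mem_definable
    fun R _ => observed_eq_mem_definable hf R

end FiniteObservation

end

theorem generalized_atom_expressible_general {AP : Type} {κ : Type*} [Finite κ]
    (B : Set (Set (κ → Prop))) (α : κ → PropForm AP) :
    ∃ ψ : EFormula AP, ∀ (ι : Type) (T : ι → Trace AP) (τ : ℕ → ι → ℕ),
      esat T τ ψ ↔ {v : κ → Prop | ∃ i : ι, v = fun j => pval (T i (τ 0 i)) (α j)} ∈ B := by
  obtain ⟨ψ, hψ⟩ :=
    observed_mem_mem_definable (preimage_truthTuple_singleton_mem_flatDefinable α) B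
  refine ⟨ψ, fun ι T τ => ?_⟩
  have observed_eq : observed (truthTuple α) T τ =
      {v : κ → Prop | ∃ i : ι, v = fun j => pval (T i (τ 0 i)) (α j)} :=
    Set.ext fun v => exists_congr fun i => eq_comm
  exact observed_eq ▸ hψ ι T τ

/-- Every generalised atom is expressible in TeamLTL(⩔, NE, A¹). -/
theorem generalized_atom_expressible (AP : Type) (n : ℕ) (hn : 1 ≤ n)
    (B : Set (Set (Fin n → Prop))) (α : Fin n → PropForm AP) :
    ∃ ψ : EFormula AP,
      ∀ (ι : Type) (T : ι → Trace AP) (τ : ℕ → ι → ℕ), IsTef τ →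
        (esat T τ ψ ↔
          {v : Fin n → Prop | ∃ i : ι, v = fun j => pval (T i (τ 0 i)) (α j)} ∈ B) :=
  let ⟨ψ, hψ⟩ := generalized_atom_expressible_general B α
  ⟨ψ, fun ι T τ _ => hψ ι T τ⟩

end TTS
end
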